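/- The variance of the position satisfies lim_{n→∞} Var(S_n)/n = 1 − 2/π. -/

import Mathlib

open Filter

theorem aux_supp (P : ℕ → ℕ → ℝ)
    (hinit : ∀ x : ℕ, P 1 x = if x = 1 then 1 else 0)
    (h0 : ∀ n : ℕ, 1 ≤ n → P (n + 1) 0 = (1 / 2) * P n 1)
    (h1 : ∀ n : ℕ, 1 ≤ n → P (n + 1) 1 = P n 0 + (1 / 2) * P n 2)
    (hx : ∀ n : ℕ, 1 ≤ n → ∀ x : ℕ, 2 ≤ x →
      P (n + 1) x = (1 / 2) * P n (x - 1) + (1 / 2) * P n (x + 1)) (n : ℕ) : ∀ x, n + 1 < x → P (n + 1) x = 0 := by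
  induction n with
  | zero =>
    intro x h
    rw [hinit, if_neg (by omega)]
  | succ n ih =>
    intro x h
    rw [hx (n + 1) (by omega) x (by omega), ih _ (by omega), ih _ (by omega)]
    norm_num

theorem aux_sum (P : ℕ → ℕ → ℝ)
    (hinit : ∀ x : ℕ, P 1 x = if x = 1 then 1 else 0)
    (h0 : ∀ n : ℕ, 1 ≤ n → P (n + 1) 0 = (1 / 2) * P n 1)
    (h1 : ∀ n : ℕ, 1 ≤ n → P (n + 1) 1 = P n 0 + (1 / 2) * P n 2)
    (hx : ∀ n : ℕ, 1 ≤ n → ∀ x : ℕ, 2 ≤ x →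
      P (n + 1) x = (1 / 2) * P n (x - 1) + (1 / 2) * P n (x + 1)) (f : ℕ → ℝ) (n : ℕ) (hn : 1 ≤ n) (N : ℕ) :
    ∑ x ∈ Finset.range (N + 2), f x * P (n + 1) x =
      f 1 * P n 0 + ∑ x ∈ Finset.range N, (f x + f (x + 2)) / 2 * P n (x + 1)
        + f N * P n (N + 1) / 2 + f (N + 1) * P n (N + 2) / 2 := by
  induction N with
  | zero =>
    simp [Finset.sum_range_succ, h0 n hn, h1 n hn]
    ring
  | succ N ih =>
    rw [Finset.sum_range_succ, ih, Finset.sum_range_succ, hx n hn (N + 2) (by omega)]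
    have e1 : N + 2 - 1 = N + 1 := by omega
    rw [e1]
    simp only [show N + 1 + 1 = N + 2 by omega, show N + 1 + 2 = N + 3 by omega]
    ring

theorem aux_tsum (P : ℕ → ℕ → ℝ)
    (hinit : ∀ x : ℕ, P 1 x = if x = 1 then 1 else 0)
    (h0 : ∀ n : ℕ, 1 ≤ n → P (n + 1) 0 = (1 / 2) * P n 1)
    (h1 : ∀ n : ℕ, 1 ≤ n → P (n + 1) 1 = P n 0 + (1 / 2) * P n 2)
    (hx : ∀ n : ℕ, 1 ≤ n → ∀ x : ℕ, 2 ≤ x →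
      P (n + 1) x = (1 / 2) * P n (x - 1) + (1 / 2) * P n (x + 1)) (f : ℕ → ℝ) (n N : ℕ) (hN : n + 1 < N) :
    ∑' x, f x * P (n + 1) x = ∑ x ∈ Finset.range N, f x * P (n + 1) x := by
  apply tsum_eq_sum
  intro x hxN
  rw [aux_supp P hinit h0 h1 hx n x (by simp at hxN; omega), mul_zero]

theorem aux_rec (P : ℕ → ℕ → ℝ)
    (hinit : ∀ x : ℕ, P 1 x = if x = 1 then 1 else 0)
    (h0 : ∀ n : ℕ, 1 ≤ n → P (n + 1) 0 = (1 / 2) * P n 1)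
    (h1 : ∀ n : ℕ, 1 ≤ n → P (n + 1) 1 = P n 0 + (1 / 2) * P n 2)
    (hx : ∀ n : ℕ, 1 ≤ n → ∀ x : ℕ, 2 ≤ x →
      P (n + 1) x = (1 / 2) * P n (x - 1) + (1 / 2) * P n (x + 1)) (f : ℕ → ℝ) (n : ℕ) :
    ∑' x, f x * P (n + 2) x =
      f 1 * P (n + 1) 0
        + ∑ x ∈ Finset.range (n + 2), (f x + f (x + 2)) / 2 * P (n + 1) (x + 1) := by
  have := aux_sum P hinit h0 h1 hx f (n + 1) (by omega) (n + 2)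
  rw [aux_tsum P hinit h0 h1 hx f (n + 1) (n + 2 + 2) (by omega), this,
    aux_supp P hinit h0 h1 hx n (n + 2 + 1) (by omega),
    aux_supp P hinit h0 h1 hx n (n + 2 + 2) (by omega)]
  ring

theorem aux_mass (P : ℕ → ℕ → ℝ)
    (hinit : ∀ x : ℕ, P 1 x = if x = 1 then 1 else 0)
    (h0 : ∀ n : ℕ, 1 ≤ n → P (n + 1) 0 = (1 / 2) * P n 1)
    (h1 : ∀ n : ℕ, 1 ≤ n → P (n + 1) 1 = P n 0 + (1 / 2) * P n 2)
    (hx : ∀ n : ℕ, 1 ≤ n → ∀ x : ℕ, 2 ≤ x →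
      P (n + 1) x = (1 / 2) * P n (x - 1) + (1 / 2) * P n (x + 1)) (n : ℕ) : ∑' x, (1 : ℝ) * P (n + 1) x = 1 := by
  induction n with
  | zero =>
    rw [aux_tsum P hinit h0 h1 hx (fun _ => 1) 0 2 (by omega)]
    simp [hinit]
  | succ n ih =>
    rw [aux_rec P hinit h0 h1 hx (fun _ => 1) n]
    rw [aux_tsum P hinit h0 h1 hx (fun _ => 1) n (n + 3) (by omega),
      Finset.sum_range_succ'] at ih
    norm_num at ih ⊢
    linarith

theorem aux_mean (P : ℕ → ℕ → ℝ)
    (hinit : ∀ x : ℕ, P 1 x = if x = 1 then 1 else 0)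
    (h0 : ∀ n : ℕ, 1 ≤ n → P (n + 1) 0 = (1 / 2) * P n 1)
    (h1 : ∀ n : ℕ, 1 ≤ n → P (n + 1) 1 = P n 0 + (1 / 2) * P n 2)
    (hx : ∀ n : ℕ, 1 ≤ n → ∀ x : ℕ, 2 ≤ x →
      P (n + 1) x = (1 / 2) * P n (x - 1) + (1 / 2) * P n (x + 1)) (n : ℕ) :
    ∑' x : ℕ, (x : ℝ) * P (n + 2) x = ∑' x : ℕ, (x : ℝ) * P (n + 1) x + P (n + 1) 0 := by
  rw [aux_rec P hinit h0 h1 hx (fun x => (x : ℝ)) n,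
    aux_tsum P hinit h0 h1 hx (fun x => (x : ℝ)) n (n + 3) (by omega),
    Finset.sum_range_succ' _ (n + 2)]
  have : ∀ x : ℕ, ((x : ℝ) + ((x + 2 : ℕ) : ℝ)) / 2 = ((x + 1 : ℕ) : ℝ) := by
    intro x; push_cast; ring
  simp only [this]
  push_cast
  ring

theorem aux_sq (P : ℕ → ℕ → ℝ)
    (hinit : ∀ x : ℕ, P 1 x = if x = 1 then 1 else 0)
    (h0 : ∀ n : ℕ, 1 ≤ n → P (n + 1) 0 = (1 / 2) * P n 1)
    (h1 : ∀ n : ℕ, 1 ≤ n → P (n + 1) 1 = P n 0 + (1 / 2) * P n 2)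
    (hx : ∀ n : ℕ, 1 ≤ n → ∀ x : ℕ, 2 ≤ x →
      P (n + 1) x = (1 / 2) * P n (x - 1) + (1 / 2) * P n (x + 1)) (n : ℕ) :
    ∑' x : ℕ, (x : ℝ) ^ 2 * P (n + 1) x = n + 1 := by
  induction n with
  | zero =>
    rw [aux_tsum P hinit h0 h1 hx (fun x => (x : ℝ) ^ 2) 0 2 (by omega)]
    simp [hinit]
  | succ n ih =>
    have hm := aux_mass P hinit h0 h1 hx n
    rw [aux_rec P hinit h0 h1 hx (fun x => (x : ℝ) ^ 2) n]
    rw [aux_tsum P hinit h0 h1 hx (fun x => (x : ℝ) ^ 2) n (n + 3) (by omega),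
      Finset.sum_range_succ'] at ih
    rw [aux_tsum P hinit h0 h1 hx (fun _ => 1) n (n + 3) (by omega),
      Finset.sum_range_succ'] at hm
    have : ∀ x : ℕ, ((x : ℝ) ^ 2 + ((x + 2 : ℕ) : ℝ) ^ 2) / 2 * P (n + 1) (x + 1)
        = ((x + 1 : ℕ) : ℝ) ^ 2 * P (n + 1) (x + 1) + 1 * P (n + 1) (x + 1) := by
      intro x; push_cast; ring
    simp only [this, Finset.sum_add_distrib]
    push_cast at *
    linarith

theorem aux_formula (P : ℕ → ℕ → ℝ)
    (hinit : ∀ x : ℕ, P 1 x = if x = 1 then 1 else 0)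
    (h0 : ∀ n : ℕ, 1 ≤ n → P (n + 1) 0 = (1 / 2) * P n 1)
    (h1 : ∀ n : ℕ, 1 ≤ n → P (n + 1) 1 = P n 0 + (1 / 2) * P n 2)
    (hx : ∀ n : ℕ, 1 ≤ n → ∀ x : ℕ, 2 ≤ x →
      P (n + 1) x = (1 / 2) * P n (x - 1) + (1 / 2) * P n (x + 1)) (m : ℕ) :
    (∀ j, P (2 * m + 1) (2 * j) = 0) ∧
    (∀ j, P (2 * m + 1) (2 * j + 1) = ((2 * m + 1).choose (m + j + 1) : ℝ) / 4 ^ m) := by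
  induction m with
  | zero =>
    refine ⟨fun j => ?_, fun j => ?_⟩
    · rw [hinit, if_neg (by omega)]
    · rw [hinit]
      rcases j with _ | j
      · simp
      · rw [if_neg (by omega), Nat.choose_eq_zero_of_lt (by omega)]; simp
  | succ m ih =>
    obtain ⟨ha, hb⟩ := ih
    have c1 : ∀ j, P (2 * m + 2) (2 * j + 1) = 0 := by
      intro j
      rcases j with _ | j
      · rw [h1 (2 * m + 1) (by omega), ha 0, ha 1]; norm_num
      · rw [hx (2 * m + 1) (by omega) _ (by omega),
          show 2 * (j + 1) + 1 - 1 = 2 * (j + 1) by omega,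
          show 2 * (j + 1) + 1 + 1 = 2 * (j + 2) by omega, ha, ha]; norm_num
    have c2 : P (2 * m + 2) 0 = ((2 * m + 2).choose (m + 1) : ℝ) / 4 ^ (m + 1) := by
      have hs : (2 * m + 2).choose (m + 1) = 2 * (2 * m + 1).choose (m + 1) := by
        rw [Nat.choose_succ_succ' (2 * m + 1) m]
        have := Nat.choose_symm_half m
        omega
      rw [h0 (2 * m + 1) (by omega), hb 0, hs]
      push_cast
      field_simp
      ring
    have c3 : ∀ j, P (2 * m + 2) (2 * j + 2)
        = 2 * ((2 * m + 2).choose (m + j + 2) : ℝ) / 4 ^ (m + 1) := by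
      intro j
      rw [hx (2 * m + 1) (by omega) _ (by omega),
        show 2 * j + 2 - 1 = 2 * j + 1 by omega,
        show 2 * j + 2 + 1 = 2 * (j + 1) + 1 by omega, hb, hb,
        Nat.choose_succ_succ' (2 * m + 1) (m + j + 1)]
      rw [show m + (j + 1) + 1 = m + j + 1 + 1 by omega]
      push_cast
      field_simp
      ring
    refine ⟨fun j => ?_, fun j => ?_⟩
    · rcases j with _ | j
      · rw [show 2 * (m + 1) + 1 = 2 * m + 2 + 1 by omega, h0 (2 * m + 2) (by omega), c1 0]
        norm_num
      · rw [show 2 * (m + 1) + 1 = 2 * m + 2 + 1 by omega, hx (2 * m + 2) (by omega) _ (by omega),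
          show 2 * (j + 1) - 1 = 2 * j + 1 by omega, c1, c1]; norm_num
    · rcases j with _ | j
      · rw [show 2 * (m + 1) + 1 = 2 * m + 2 + 1 by omega, h1 (2 * m + 2) (by omega), c2,
          show P (2 * m + 2) 2 = _ from c3 0, show m + 1 + 0 + 1 = m + 1 + 1 by omega,
          Nat.choose_succ_succ' (2 * m + 2) (m + 1)]
        rw [show m + 0 + 2 = m + 1 + 1 by omega]
        push_cast
        field_simp
      · rw [show 2 * (m + 1) + 1 = 2 * m + 2 + 1 by omega, hx (2 * m + 2) (by omega) _ (by omega),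
          show 2 * (j + 1) + 1 - 1 = 2 * j + 2 by omega,
          show 2 * (j + 1) + 1 + 1 = 2 * (j + 1) + 2 by omega, c3, c3,
          show m + 1 + (j + 1) + 1 = m + j + 2 + 1 by omega,
          Nat.choose_succ_succ' (2 * m + 2) (m + j + 2)]
        rw [show m + (j + 1) + 2 = m + j + 2 + 1 by omega]
        push_cast
        field_simp

theorem aux_even (P : ℕ → ℕ → ℝ)
    (hinit : ∀ x : ℕ, P 1 x = if x = 1 then 1 else 0)
    (h0 : ∀ n : ℕ, 1 ≤ n → P (n + 1) 0 = (1 / 2) * P n 1)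
    (h1 : ∀ n : ℕ, 1 ≤ n → P (n + 1) 1 = P n 0 + (1 / 2) * P n 2)
    (hx : ∀ n : ℕ, 1 ≤ n → ∀ x : ℕ, 2 ≤ x →
      P (n + 1) x = (1 / 2) * P n (x - 1) + (1 / 2) * P n (x + 1)) (m : ℕ) :
    P (2 * m + 2) 0 = ((m + 1).centralBinom : ℝ) / 4 ^ (m + 1) := by
  have hs : (m + 1).centralBinom = 2 * (2 * m + 1).choose (m + 1) := by
    rw [Nat.centralBinom, show 2 * (m + 1) = 2 * m + 1 + 1 by omega,
      Nat.choose_succ_succ' (2 * m + 1) m]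
    have := Nat.choose_symm_half m
    omega
  rw [h0 (2 * m + 1) (by omega),
    show P (2 * m + 1) 1 = _ from (aux_formula P hinit h0 h1 hx m).2 0, hs]
  push_cast
  field_simp
  ring

theorem aux_meanOdd (P : ℕ → ℕ → ℝ)
    (hinit : ∀ x : ℕ, P 1 x = if x = 1 then 1 else 0)
    (h0 : ∀ n : ℕ, 1 ≤ n → P (n + 1) 0 = (1 / 2) * P n 1)
    (h1 : ∀ n : ℕ, 1 ≤ n → P (n + 1) 1 = P n 0 + (1 / 2) * P n 2)
    (hx : ∀ n : ℕ, 1 ≤ n → ∀ x : ℕ, 2 ≤ x →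
      P (n + 1) x = (1 / 2) * P n (x - 1) + (1 / 2) * P n (x + 1)) (m : ℕ) :
    ∑' x : ℕ, (x : ℝ) * P (2 * m + 1) x = (2 * m + 1) * ((m.centralBinom : ℝ) / 4 ^ m) := by
  induction m with
  | zero =>
    rw [aux_tsum P hinit h0 h1 hx (fun x => (x : ℝ)) 0 2 (by omega)]
    simp [hinit]
  | succ m ih =>
    have e1 := aux_mean P hinit h0 h1 hx (2 * m)
    have e2 := aux_mean P hinit h0 h1 hx (2 * m + 1)
    have z : P (2 * m + 1) 0 = 0 := (aux_formula P hinit h0 h1 hx m).1 0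
    have hc := Nat.succ_mul_centralBinom_succ m
    have hc' : ((m : ℝ) + 1) * ((m + 1).centralBinom : ℝ)
        = 2 * (2 * m + 1) * (m.centralBinom : ℝ) := by exact_mod_cast hc
    rw [show 2 * (m + 1) + 1 = 2 * m + 1 + 2 by omega, e2,
      show 2 * m + 1 + 1 = 2 * m + 2 by omega, e1, z, ih, aux_even P hinit h0 h1 hx m]
    push_cast
    field_simp
    rw [pow_succ]
    linear_combination (-2 * (4:ℝ) ^ m) * hc'

theorem aux_W (m : ℕ) :
    ((m.centralBinom : ℝ) / 4 ^ m) ^ 2 * (2 * m + 1) * Real.Wallis.W m = 1 := by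
  induction m with
  | zero => simp [Real.Wallis.W]
  | succ m ih =>
    have hc' : ((m : ℝ) + 1) * ((m + 1).centralBinom : ℝ)
        = 2 * (2 * m + 1) * (m.centralBinom : ℝ) := by
      exact_mod_cast Nat.succ_mul_centralBinom_succ m
    have hd : ((m + 1).centralBinom : ℝ) = 2 * (2 * m + 1) * (m.centralBinom : ℝ) / (m + 1) := by
      field_simp
      linarith
    rw [Real.Wallis.W_succ, hd, pow_succ]
    refine Eq.trans ?_ ih
    push_cast
    have : (2 * (m : ℝ) + 3) ≠ 0 := by positivity
    have h' : (2 * ((m : ℝ) + 1) + 1) ≠ 0 := by positivity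
    field_simp
    ring

theorem aux_meanSq (P : ℕ → ℕ → ℝ)
    (hinit : ∀ x : ℕ, P 1 x = if x = 1 then 1 else 0)
    (h0 : ∀ n : ℕ, 1 ≤ n → P (n + 1) 0 = (1 / 2) * P n 1)
    (h1 : ∀ n : ℕ, 1 ≤ n → P (n + 1) 1 = P n 0 + (1 / 2) * P n 2)
    (hx : ∀ n : ℕ, 1 ≤ n → ∀ x : ℕ, 2 ≤ x →
      P (n + 1) x = (1 / 2) * P n (x - 1) + (1 / 2) * P n (x + 1)) (k : ℕ) :
    (∑' x : ℕ, (x : ℝ) * P (k + 1) x) ^ 2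
      = (2 * ((k / 2 : ℕ) : ℝ) + 1) * (Real.Wallis.W (k / 2))⁻¹ := by
  have key : ∀ m : ℕ, (∑' x : ℕ, (x : ℝ) * P (2 * m + 1) x) ^ 2
      = (2 * (m : ℝ) + 1) * (Real.Wallis.W m)⁻¹ := by
    intro m
    have hW := Real.Wallis.W_pos m
    rw [aux_meanOdd P hinit h0 h1 hx m, eq_mul_inv_iff_mul_eq₀ hW.ne']
    linear_combination (2 * (m : ℝ) + 1) * aux_W m
  rcases Nat.even_or_odd' k with ⟨m, rfl | rfl⟩
  · rw [key, show 2 * m / 2 = m by omega]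
  · rw [show (2 * m + 1) / 2 = m by omega, aux_mean P hinit h0 h1 hx (2 * m),
      show P (2 * m + 1) 0 = 0 from (aux_formula P hinit h0 h1 hx m).1 0, add_zero, key]

/-- For the symmetric nearest-neighbor walk on the nonnegative
integers reflected at the origin (law `P n x = P{S_n = x}` determined by
`P 1 x = δ_{x,1}` and the stated recurrences), with
`E(S_n) = Σ_{x≥0} x·P_n(x)` and `Var(S_n) = Σ_{x≥0} x²·P_n(x) − E(S_n)²`,
we have `lim_{n→∞} Var(S_n)/n = 1 − 2/π`. -/
theorem stmt_3 (P : ℕ → ℕ → ℝ)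
    (hinit : ∀ x : ℕ, P 1 x = if x = 1 then 1 else 0)
    (h0 : ∀ n : ℕ, 1 ≤ n → P (n + 1) 0 = (1 / 2) * P n 1)
    (h1 : ∀ n : ℕ, 1 ≤ n → P (n + 1) 1 = P n 0 + (1 / 2) * P n 2)
    (hx : ∀ n : ℕ, 1 ≤ n → ∀ x : ℕ, 2 ≤ x →
      P (n + 1) x = (1 / 2) * P n (x - 1) + (1 / 2) * P n (x + 1))
    (E Var : ℕ → ℝ)
    (hE : ∀ n : ℕ, E n = ∑' x : ℕ, (x : ℝ) * P n x)
    (hVar : ∀ n : ℕ, Var n = (∑' x : ℕ, (x : ℝ) ^ 2 * P n x) - (E n) ^ 2) :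
    Tendsto (fun n : ℕ => Var n / n) atTop (nhds (1 - 2 / Real.pi)) := by
  rw [← tendsto_add_atTop_iff_nat 1]
  have hdiv : Tendsto (fun k : ℕ => k / 2) atTop atTop :=
    tendsto_atTop_atTop.2 fun b => ⟨2 * b, fun a ha => by omega⟩
  have hW : Tendsto (fun k : ℕ => (Real.Wallis.W (k / 2))⁻¹) atTop (nhds (Real.pi / 2)⁻¹) :=
    (Real.Wallis.tendsto_W_nhds_pi_div_two.comp hdiv).inv₀ (by positivity)
  have hr : Tendsto (fun k : ℕ => (2 * ((k / 2 : ℕ) : ℝ) + 1) / ((k : ℝ) + 1)) atTop (nhds 1) := by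
    refine tendsto_of_tendsto_of_tendsto_of_le_of_le (tendsto_natCast_div_add_atTop (1 : ℝ))
      tendsto_const_nhds (fun k => ?_) (fun k => ?_)
    · have : (k : ℝ) ≤ 2 * ((k / 2 : ℕ) : ℝ) + 1 := by
        exact_mod_cast (by omega : k ≤ 2 * (k / 2) + 1)
      show (k : ℝ) / (k + 1) ≤ _
      gcongr
    · have : 2 * ((k / 2 : ℕ) : ℝ) ≤ k := by
        exact_mod_cast (by omega : 2 * (k / 2) ≤ k)
      show _ / ((k : ℝ) + 1) ≤ 1
      rw [div_le_one (by positivity)]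
      linarith
  have hlim := (hr.mul hW).const_sub 1
  rw [one_mul, inv_div] at hlim
  refine hlim.congr fun k => ?_
  rw [hVar, hE, aux_sq P hinit h0 h1 hx k, aux_meanSq P hinit h0 h1 hx k]
  push_cast
  have : (k : ℝ) + 1 ≠ 0 := by positivity
  field_simp
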